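/- arXiv:2310.01913 — 3 statements merged into one kernel-verified Lean document; each statement's English description precedes it below -/
import Mathlib

section
/- For every δ > 0 there exists g ∈ A₁ with g(0) > 0 and ĝ compactly supported such that ρ₁(g)/g(0) ≤ C₁ + δ; that is, the infimum defining C₁ is unchanged if it is restricted to the subclass A₁^{BL} ⊂ A₁ of functions whose Fourier transform has compact support. -/
open MeasureTheory Filter
open scoped Classical

noncomputable section

/-- The Fourier transform `ĝ(α) = ∫ g(x) e^{-2πiαx} dx` of a real-valued function. -/
def fourierT (g : ℝ → ℝ) (α : ℝ) : ℂ :=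
  ∫ x : ℝ, (g x : ℂ) * Complex.exp (-(2 * Real.pi * α * x : ℝ) * Complex.I)

/-- The class `A₁` of continuous, even, non-negative functions `g ∈ L¹(ℝ)`
with `ĝ(α) ≤ 0` for `|α| ≥ 1` (such `ĝ` is real-valued since `g` is even and real). -/
def memA1 (g : ℝ → ℝ) : Prop :=
  Continuous g ∧ (∀ x, g (-x) = g x) ∧ (∀ x, 0 ≤ g x) ∧ MeasureTheory.Integrable g ∧
    ∀ α : ℝ, 1 ≤ |α| → (fourierT g α).re ≤ 0

/-- The functional `ρ₁(g) = ĝ(0) + ∫_{-1}^{1} ĝ(α)|α| dα`. -/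
def rho1 (g : ℝ → ℝ) : ℝ :=
  (fourierT g 0).re + ∫ α in (-1 : ℝ)..1, (fourierT g α).re * |α|

/-- The constant `C₁ = inf ρ₁(g)/g(0)` over nonzero `g ∈ A₁` with `g(0) > 0`. -/
def C1 : ℝ :=
  sInf {c : ℝ | ∃ g : ℝ → ℝ, memA1 g ∧ g ≠ 0 ∧ 0 < g 0 ∧ c = rho1 g / g 0}

open FourierTransform Convolution

lemma fourierT_eq (g : ℝ → ℝ) (α : ℝ) : fourierT g α = 𝓕 (fun x => (g x : ℂ)) α := by
  rw [Real.fourier_real_eq_integral_exp_smul, fourierT]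
  congr 1; ext x
  rw [smul_eq_mul, mul_comm]
  congr 2
  push_cast; ring

lemma fourierT_neg (g : ℝ → ℝ) (hg : ∀ x, g (-x) = g x) (α : ℝ) :
    fourierT g (-α) = fourierT g α := by
  unfold fourierT
  rw [← integral_neg_eq_self]
  congr 1; ext x
  rw [hg]
  congr 3
  push_cast; ring

lemma fourierT_conj (g : ℝ → ℝ) (α : ℝ) :
    (starRingEnd ℂ) (fourierT g α) = fourierT g (-α) := by
  unfold fourierT
  rw [← integral_conj]
  congr 1; ext x
  rw [map_mul, Complex.conj_ofReal, ← Complex.exp_conj, map_mul, Complex.conj_I, map_neg,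
    Complex.conj_ofReal]
  congr 2
  push_cast; ring

lemma fourierT_real (g : ℝ → ℝ) (hg : ∀ x, g (-x) = g x) (α : ℝ) :
    (((fourierT g α).re : ℝ) : ℂ) = fourierT g α := by
  apply Complex.conj_eq_iff_re.1
  rw [fourierT_conj, fourierT_neg g hg]

lemma fourierT_continuous (g : ℝ → ℝ) (hg : Integrable g) : Continuous (fourierT g) := by
  have h : fourierT g = 𝓕 (fun x => (g x : ℂ)) := funext (fourierT_eq g)
  rw [h]
  exact VectorFourier.fourierIntegral_continuous Real.continuous_fourierChar
    (by exact continuous_inner) hg.ofReal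

lemma fourierT_scale (k : ℝ → ℝ) (R : ℝ) (hR : 0 < R) (α : ℝ) :
    fourierT (fun x => R * k (R * x)) α = fourierT k (α / R) := by
  unfold fourierT
  have := Measure.integral_comp_mul_left (fun x : ℝ => (k x : ℂ) * Complex.exp (-(2 * Real.pi * (α / R) * x : ℝ) * Complex.I)) R
  have h2 : ∀ x : ℝ, ((R * k (R * x) : ℝ) : ℂ) * Complex.exp (-(2 * Real.pi * α * x : ℝ) * Complex.I)
     = (R : ℂ) * ((k (R * x) : ℂ) * Complex.exp (-(2 * Real.pi * (α / R) * (R * x) : ℝ) * Complex.I)) := by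
    intro x
    have : 2 * Real.pi * (α / R) * (R * x) = 2 * Real.pi * α * x := by field_simp
    rw [this]; push_cast; ring
  simp_rw [h2]
  rw [integral_const_mul, this, abs_of_pos (inv_pos.2 hR), Complex.real_smul, ← mul_assoc,
    ← Complex.ofReal_mul, mul_inv_cancel₀ hR.ne']
  simp

lemma fourierT_conv (g k : ℝ → ℝ) (hg : Integrable g) (hk : Integrable k) (α : ℝ) :
    fourierT (g ⋆[ContinuousLinearMap.mul ℝ ℝ] k) α = fourierT g α * fourierT k α := by
  rw [fourierT_eq, fourierT_eq, fourierT_eq]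
  refine Eq.trans ?_ (Real.fourier_mul_convolution_eq (f₁ := fun x => (g x : ℂ))
    (f₂ := fun x => (k x : ℂ)) hg.ofReal hk.ofReal α)
  refine congrArg (fun f : ℝ → ℂ => 𝓕 f α) (funext fun x => ?_)
  simp only [convolution, ContinuousLinearMap.mul_apply']
  rw [← integral_complex_ofReal]
  push_cast
  rfl

lemma exists_kernel : ∃ k : ℝ → ℝ, Continuous k ∧ (∀ x, k (-x) = k x) ∧ (∀ x, 0 ≤ k x) ∧
    Integrable k ∧ (∫ x, k x = 1) ∧ 0 < k 0 ∧
    Tendsto (fun x ↦ ‖x‖ * k x) (Bornology.cobounded ℝ) (nhds 0) ∧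
    (∃ M, ∀ x, k x ≤ M) ∧
    ∃ ψ : ℝ → ℝ, (∀ α, fourierT k α = ψ α) ∧ (∀ α, 0 ≤ ψ α) ∧ (∀ α, 1 ≤ |α| → ψ α = 0) := by
  let φ : ContDiffBump (0:ℝ) := ⟨1/4, 1/2, by norm_num, by norm_num⟩
  have hφe : ∀ x, φ (-x) = φ x := fun x => φ.neg x
  have hφc : HasCompactSupport (fun x => (φ x : ℂ)) :=
    φ.hasCompactSupport.comp_left (g := fun x : ℝ => (x : ℂ)) (by simp)
  have hφs : ContDiff ℝ (⊤ : ℕ∞) (fun x => (φ x : ℂ)) :=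
    Complex.ofRealCLM.contDiff.comp φ.contDiff
  let F : SchwartzMap ℝ ℂ := hφc.toSchwartzMap hφs
  have hF : ∀ x, F x = (φ x : ℂ) := fun x => rfl
  let C := SchwartzMap.convolution (ContinuousLinearMap.mul ℂ ℂ) F F
  let c : ℝ → ℝ := fun x => ∫ t, φ t * φ (x - t)
  have hC : ∀ x, C x = (c x : ℂ) := by
    intro x
    simp only [C, c]
    rw [SchwartzMap.convolution_apply, ← integral_complex_ofReal]
    simp only [convolution, ContinuousLinearMap.mul_apply', hF]
    push_cast; rfl
  have hc0 : ∀ x, 0 ≤ c x := fun x => integral_nonneg fun t => mul_nonneg φ.nonneg φ.nonneg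
  have hc1 : ∀ x, 1 ≤ |x| → c x = 0 := by
    intro x hx
    simp only [c]
    refine integral_eq_zero_of_ae (Eventually.of_forall fun t => ?_)
    show φ t * φ (x - t) = 0
    by_cases h : 1/2 ≤ |t|
    · rw [φ.zero_of_le_dist (by simpa [φ, Real.dist_eq] using h)]; simp
    · rw [φ.zero_of_le_dist (x := x - t), mul_zero]
      have := abs_sub_abs_le_abs_sub x t
      rw [Real.dist_eq, sub_zero]
      show (1/2:ℝ) ≤ _
      linarith
  let H : SchwartzMap ℝ ℂ := 𝓕 C
  let k0 : ℝ → ℝ := fun x => (fourierT φ x).re ^ 2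
  have hH : ∀ x, H x = (k0 x : ℂ) := by
    intro x
    simp only [H, C, k0]
    rw [SchwartzMap.fourier_convolution, SchwartzMap.pairing_apply_apply]
    simp only [ContinuousLinearMap.mul_apply']
    push_cast
    rw [fourierT_real φ hφe, fourierT_eq, SchwartzMap.fourier_coe, sq]
    rfl
  have hT : ∀ α, fourierT k0 α = c (-α) := by
    intro α
    rw [fourierT_eq, ← hC]
    have : (fun x => (k0 x : ℂ)) = H := funext fun x => (hH x).symm
    rw [this]
    have h2 : C = 𝓕⁻ H := by simp [H]
    rw [h2, SchwartzMap.fourierInv_coe, Real.fourierInv_eq_fourier_neg, neg_neg]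
  have hk0 : k0 = fun x => (H x).re := funext fun x => by rw [hH]; simp
  have hint : Integrable k0 := by rw [hk0]; exact H.integrable.re
  have hm : ∫ x, k0 x = c 0 := by
    have := hT 0
    simp only [fourierT] at this
    simp [integral_complex_ofReal] at this
    exact_mod_cast this
  have hcont : Continuous (φ : ℝ → ℝ) := φ.continuous
  have hmpos : 0 < c 0 := by
    apply Continuous.integral_pos_of_hasCompactSupport_nonneg_nonzero (x := 0)
    · fun_prop
    · exact φ.hasCompactSupport.mul_right
    · intro x; exact mul_nonneg φ.nonneg φ.nonneg
    · have : 0 < φ 0 := φ.pos_of_mem_ball (by simp [φ])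
      simp only [sub_zero]
      positivity
  have hk00 : 0 < k0 0 := by
    have : fourierT φ 0 = ((∫ x, φ x : ℝ) : ℂ) := by
      simp [fourierT, integral_complex_ofReal]
    simp only [k0, this, Complex.ofReal_re]
    exact pow_pos φ.integral_pos 2
  refine ⟨fun x => k0 x / c 0, ?_, ?_, ?_, ?_, ?_, ?_, ?_, ?_, fun α => c (-α) / c 0, ?_, ?_, ?_⟩
  · rw [hk0]
    have := H.continuous
    fun_prop
  · intro x; simp only [k0]; rw [fourierT_neg φ hφe]
  · intro x; positivity
  · exact hint.div_const _
  · rw [integral_div, hm, div_self hmpos.ne']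
  · positivity
  · obtain ⟨D, hDp, hD⟩ := H.decay 2 0
    have h0 : Tendsto (fun x : ℝ => D / c 0 / ‖x‖) (Bornology.cobounded ℝ) (nhds 0) :=
      tendsto_const_nhds.div_atTop tendsto_norm_cobounded_atTop
    refine squeeze_zero' (Eventually.of_forall fun x => by positivity) ?_ h0
    filter_upwards [tendsto_norm_cobounded_atTop.eventually_gt_atTop (0:ℝ)] with x hx
    have h1 := hD x
    rw [norm_iteratedFDeriv_zero, hH, Complex.norm_real, Real.norm_of_nonneg (sq_nonneg _)] at h1
    rw [le_div_iff₀ hx, le_div_iff₀ hmpos]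
    calc ‖x‖ * (k0 x / c 0) * ‖x‖ * c 0 = ‖x‖ ^ 2 * k0 x := by field_simp
      _ ≤ D := h1
  · obtain ⟨D, hDp, hD⟩ := H.decay 0 0
    refine ⟨D / c 0, fun x => ?_⟩
    have h1 := hD x
    rw [norm_iteratedFDeriv_zero, hH, Complex.norm_real, Real.norm_of_nonneg (sq_nonneg _),
      pow_zero, one_mul] at h1
    exact div_le_div_of_nonneg_right h1 hmpos.le
  · intro α
    have : fourierT (fun x => k0 x / c 0) α = fourierT k0 α / c 0 := by
      unfold fourierT
      rw [← integral_div]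
      congr 1; ext x; push_cast; ring
    rw [this, hT]; push_cast; rfl
  · intro α; exact div_nonneg (hc0 _) hmpos.le
  · intro α hα; simp only; rw [hc1 _ (by rwa [abs_neg]), zero_div]

theorem statement12 (δ : ℝ) (hδ : 0 < δ) :
    ∃ g : ℝ → ℝ, memA1 g ∧ g ≠ 0 ∧ 0 < g 0 ∧ HasCompactSupport (fourierT g) ∧
      rho1 g / g 0 ≤ C1 + δ := by
  obtain ⟨k, hkc, hke, hk0, hki, hk1, hkp, hkd, ⟨M, hM⟩, ψ, hψ, hψ0, hψ1⟩ := exists_kernel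
  have hne : {c : ℝ | ∃ g : ℝ → ℝ, memA1 g ∧ g ≠ 0 ∧ 0 < g 0 ∧ c = rho1 g / g 0}.Nonempty := by
    refine ⟨_, k, ⟨hkc, hke, hk0, hki, fun α hα => ?_⟩, fun h => ?_, hkp, rfl⟩
    · rw [hψ, hψ1 α hα]; simp
    · rw [h] at hkp; simp at hkp
  obtain ⟨_, ⟨g, ⟨hgc, hge, hg0, hgi, hgF⟩, -, hgp, rfl⟩, hlt⟩ :=
    exists_lt_of_csInf_lt hne (show C1 < C1 + δ by linarith)
  let K : ℝ → ℝ → ℝ := fun R x => R * k (R * x)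
  let G : ℝ → ℝ → ℝ := fun R => g ⋆[ContinuousLinearMap.mul ℝ ℝ] (K R)
  have hKi : ∀ R, 0 < R → Integrable (K R) := fun R hR => (hki.comp_mul_left' hR.ne').const_mul R
  have hGF : ∀ R, 0 < R → ∀ α, fourierT (G R) α = fourierT g α * ψ (α / R) := by
    intro R hR α
    rw [fourierT_conv g (K R) hgi (hKi R hR), fourierT_scale k R hR, hψ]
  have hψr : ∀ α, ψ α = (fourierT k α).re := fun α => by rw [hψ]; simp
  have hψc : Continuous ψ := by
    rw [funext hψr]; exact Complex.continuous_re.comp (fourierT_continuous k hki)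
  have hψ01 : ψ 0 = 1 := by
    have := hψ 0
    simp [fourierT, integral_complex_ofReal, hk1] at this
    exact_mod_cast this.symm
  have hψle : ∀ α, ψ α ≤ 1 := by
    intro α
    rw [hψr]
    refine (Complex.re_le_norm _).trans ?_
    unfold fourierT
    refine (norm_integral_le_integral_norm _).trans ?_
    rw [← hk1]
    apply le_of_eq
    congr 1; ext x
    rw [norm_mul, ← Complex.ofReal_neg, Complex.norm_exp_ofReal_mul_I, mul_one,
      Complex.norm_real, Real.norm_of_nonneg (hk0 x)]
  have lim0 : Tendsto (fun R => G R 0) atTop (nhds (g 0)) := by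
    have := tendsto_integral_comp_smul_smul_of_integrable (μ := volume) hk0 hk1 (by simpa using hkd) hgi hgc.continuousAt
    refine this.congr fun R => ?_
    simp only [G, convolution, K, ContinuousLinearMap.mul_apply']
    congr 1; ext x
    simp [hke]; ring
  have limψ : ∀ α, Tendsto (fun R => ψ (α / R)) atTop (nhds 1) := by
    intro α
    rw [← hψ01]
    exact (hψc.tendsto 0).comp (tendsto_const_nhds.div_atTop tendsto_id)
  have hgFc := fourierT_continuous g hgi
  have limρ : Tendsto (fun R => rho1 (G R)) atTop (nhds (rho1 g)) := by
    have : Tendsto (fun R => (fourierT g 0).re * ψ (0 / R) +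
        ∫ α in (-1 : ℝ)..1, ((fourierT g α).re * ψ (α / R)) * |α|) atTop (nhds (rho1 g)) := by
      apply Tendsto.add
      · simpa using (limψ 0).const_mul (fourierT g 0).re
      · apply intervalIntegral.tendsto_integral_filter_of_dominated_convergence
          (fun α => |(fourierT g α).re| * |α|)
        · refine Eventually.of_forall fun R => Continuous.aestronglyMeasurable ?_
          fun_prop
        · refine Eventually.of_forall fun R => Eventually.of_forall fun α _ => ?_
          rw [norm_mul, norm_mul, Real.norm_eq_abs, Real.norm_eq_abs, Real.norm_eq_abs, abs_abs,
            abs_of_nonneg (hψ0 _)]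
          gcongr
          exact mul_le_of_le_one_right (abs_nonneg _) (hψle _)
        · apply Continuous.intervalIntegrable
          fun_prop
        · refine Eventually.of_forall fun α _ => ?_
          simpa using ((limψ α).const_mul (fourierT g α).re).mul_const |α|
    refine this.congr' ?_
    filter_upwards [eventually_gt_atTop 0] with R hR
    unfold rho1
    simp only [hGF R hR, Complex.re_mul_ofReal]
  have limq := limρ.div lim0 hgp.ne'
  obtain ⟨R, hRlt, hRp, hR⟩ := ((limq.eventually_lt_const hlt).and
    ((lim0.eventually_const_lt hgp).and (eventually_gt_atTop 0))).exists
  refine ⟨G R, ⟨?_, ?_, ?_, ?_, ?_⟩, ?_, hRp, ?_, hRlt.le⟩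
  · refine BddAbove.continuous_convolution_right_of_integrable _ ?_ hgi (by fun_prop)
    refine ⟨R * M, ?_⟩
    rintro _ ⟨x, rfl⟩
    simp only [K]
    rw [Real.norm_of_nonneg (mul_nonneg hR.le (hk0 _))]
    exact mul_le_mul_of_nonneg_left (hM _) hR.le
  · intro x
    simp only [G, convolution, K, ContinuousLinearMap.mul_apply']
    rw [← integral_neg_eq_self]
    congr 1; ext t
    rw [hge, ← hke]
    congr 3; ring
  · intro x
    exact integral_nonneg fun t => mul_nonneg (hg0 _) (mul_nonneg hR.le (hk0 _))
  · exact hgi.integrable_convolution _ (hKi R hR)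
  · intro α hα
    rw [hGF R hR, Complex.re_mul_ofReal]
    exact mul_nonpos_of_nonpos_of_nonneg (hgF α hα) (hψ0 _)
  · intro h; rw [h] at hRp; simp at hRp
  · apply HasCompactSupport.intro (isCompact_Icc (a := -R) (b := R))
    intro α hα
    rw [hGF R hR, hψ1, Complex.ofReal_zero, mul_zero]
    rw [abs_div, abs_of_pos hR, le_div_iff₀ hR, one_mul]
    by_contra h
    push Not at h
    exact hα (abs_le.1 h.le)

end
end

section
/- C₁ < 1.3208; that is, there exists g ∈ A₁, not identically zero, with g(0) > 0 and ρ₁(g)/g(0) < 1.3208. -/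
open MeasureTheory Filter
open scoped Classical

noncomputable section

/-! ### The triangle function and the squared sinc -/

def tri (u : ℝ) : ℝ := max 0 (1 - |u|)

def sker (y : ℝ) : ℝ := Real.sinc (Real.pi * y) ^ 2

lemma tri_continuous : Continuous tri := by unfold tri; fun_prop

lemma tri_nonneg (u : ℝ) : 0 ≤ tri u := le_max_left _ _

lemma tri_eq_zero {u : ℝ} (h : 1 ≤ |u|) : tri u = 0 := by
  unfold tri; exact max_eq_left (by linarith)

lemma tri_neg (u : ℝ) : tri (-u) = tri u := by unfold tri; rw [abs_neg]

lemma tri_left {u : ℝ} (h : -1 ≤ u) (h' : u ≤ 0) : tri u = 1 + u := by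
  unfold tri; rw [abs_of_nonpos h', max_eq_right] <;> linarith

lemma tri_right {u : ℝ} (h : 0 ≤ u) (h' : u ≤ 1) : tri u = 1 - u := by
  unfold tri; rw [abs_of_nonneg h, max_eq_right]; linarith

lemma tri_mul_support {E : Type*} [NormedAddCommGroup E] [NormedSpace ℝ E] (f : ℝ → E) :
    Function.support (fun u => tri u • f u) ⊆ Set.Ioc (-1) 1 := by
  intro u hu
  by_contra h
  apply hu
  have : 1 ≤ |u| := by
    by_contra h2
    push Not at h2
    rw [abs_lt] at h2
    exact h ⟨h2.1, h2.2.le⟩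
  simp [tri_eq_zero this]

/-- Integral of a function against the triangle. -/
lemma integral_tri_smul {E : Type*} [NormedAddCommGroup E] [NormedSpace ℝ E]
    (f : ℝ → E) (hf : Continuous f) :
    ∫ u in (-1:ℝ)..1, tri u • f u
      = (∫ u in (-1:ℝ)..0, (1 + u) • f u) + ∫ u in (0:ℝ)..1, (1 - u) • f u := by
  have hc : Continuous (fun u => tri u • f u) := tri_continuous.smul hf
  rw [← intervalIntegral.integral_add_adjacent_intervals (b := 0)
    (hc.intervalIntegrable _ _) (hc.intervalIntegrable _ _)]
  congr 1
  · apply intervalIntegral.integral_congr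
    intro u hu
    rw [Set.uIcc_of_le (by norm_num)] at hu
    simp only [tri_left hu.1 hu.2]
  · apply intervalIntegral.integral_congr
    intro u hu
    rw [Set.uIcc_of_le (by norm_num)] at hu
    simp only [tri_right hu.1 hu.2]

lemma integral_tri_full {E : Type*} [NormedAddCommGroup E] [NormedSpace ℝ E]
    (f : ℝ → E) (hf : Continuous f) :
    ∫ u, tri u • f u
      = (∫ u in (-1:ℝ)..0, (1 + u) • f u) + ∫ u in (0:ℝ)..1, (1 - u) • f u := by
  rw [← integral_tri_smul f hf]
  exact (intervalIntegral.integral_eq_integral_of_support_subset (tri_mul_support f)).symm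

lemma integral_tri_exp (w : ℂ) (hw : w ≠ 0) :
    ∫ u : ℝ, tri u • Complex.exp (w * u)
      = (Complex.exp w + Complex.exp (-w) - 2) / w ^ 2 := by
  rw [integral_tri_full _ (by fun_prop)]
  have hu : ∀ v : ℝ, HasDerivAt (fun v : ℝ => (v : ℂ)) 1 v := fun v =>
    Complex.ofRealCLM.hasDerivAt
  have he : ∀ v : ℝ, HasDerivAt (fun v : ℝ => Complex.exp (w * v))
      (Complex.exp (w * v) * (w * 1)) v := fun v => ((hu v).const_mul w).cexp
  have h1 : ∫ u in (-1:ℝ)..0, (1 + u) • Complex.exp (w * u)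
      = (1 / w - 1 / w ^ 2) + Complex.exp (-w) / w ^ 2 := by
    rw [intervalIntegral.integral_eq_sub_of_hasDerivAt
      (f := fun v : ℝ => ((1 + (v:ℂ)) / w - 1 / w ^ 2) * Complex.exp (w * v))]
    · simp; ring
    · intro v _
      have := (((((hu v).const_add 1).div_const w).sub_const (1 / w ^ 2))).mul (he v)
      convert! this using 1
      rw [Complex.real_smul]; push_cast
      field_simp
      ring
    · apply Continuous.intervalIntegrable; fun_prop
  have h2 : ∫ u in (0:ℝ)..1, (1 - u) • Complex.exp (w * u)
      = Complex.exp w / w ^ 2 - (1 / w + 1 / w ^ 2) := by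
    rw [intervalIntegral.integral_eq_sub_of_hasDerivAt
      (f := fun v : ℝ => ((1 - (v:ℂ)) / w + 1 / w ^ 2) * Complex.exp (w * v))]
    · simp; ring
    · intro v _
      have := (((((hu v).const_sub 1).div_const w).add_const (1 / w ^ 2))).mul (he v)
      convert! this using 1
      rw [Complex.real_smul]; push_cast
      field_simp
      ring
    · apply Continuous.intervalIntegrable; fun_prop
  rw [h1, h2]
  field_simp
  ring

lemma integral_tri_one : ∫ u : ℝ, tri u • (1 : ℂ) = 1 := by
  rw [integral_tri_full _ (by fun_prop)]
  have h1 : ∫ u in (-1:ℝ)..0, (1 + u) • (1:ℂ) = 1 / 2 := by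
    rw [intervalIntegral.integral_smul_const]
    rw [intervalIntegral.integral_add (by simp) (by simp)]
    simp; norm_num
  have h2 : ∫ u in (0:ℝ)..1, (1 - u) • (1:ℂ) = 1 / 2 := by
    rw [intervalIntegral.integral_smul_const]
    rw [intervalIntegral.integral_sub (by simp) (by simp)]
    simp; norm_num
  rw [h1, h2]; norm_num

open FourierTransform in
lemma fourier_tri (x : ℝ) : 𝓕 (fun u : ℝ => (tri u : ℂ)) x = (sker x : ℂ) := by
  rw [Real.fourier_real_eq_integral_exp_smul]
  by_cases hx : x = 0
  · subst hx
    have := integral_tri_one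
    simp only [Complex.real_smul, mul_one] at this
    simpa [sker] using this
  · have hp := Real.pi_pos.ne'
    have hxC : (x : ℂ) ≠ 0 := by exact_mod_cast hx
    have hpC : (Real.pi : ℂ) ≠ 0 := by exact_mod_cast hp
    have hw : (-2 * Real.pi * x * Complex.I : ℂ) ≠ 0 := by
      simp [hx, hp]
    have := integral_tri_exp _ hw
    have e : ∀ v : ℝ, Complex.exp (((-2 * Real.pi * v * x : ℝ) : ℂ) * Complex.I) • (tri v : ℂ)
        = tri v • Complex.exp ((-2 * Real.pi * x * Complex.I : ℂ) * v) := by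
      intro v
      rw [Complex.real_smul, smul_eq_mul, mul_comm]
      congr 2; push_cast; ring
    simp_rw [e]
    rw [this]
    have hs : (sker x : ℂ) = (1 - Complex.cos (2 * (Real.pi * x))) / (2 * (Real.pi * x) ^ 2) := by
      unfold sker
      rw [Real.sinc_of_ne_zero (mul_ne_zero hp hx), Complex.cos_two_mul, Complex.cos_sq']
      push_cast
      field_simp
      ring
    rw [hs, Complex.cos]
    have e1 : (2 * (Real.pi * x) * Complex.I : ℂ) = -(-2 * Real.pi * x * Complex.I) := by ring
    have e2 : (-(2 * (Real.pi * x)) * Complex.I : ℂ) = (-2 * Real.pi * x * Complex.I) := by ring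
    rw [e1, e2]
    have hI : (-2 * Real.pi * x * Complex.I : ℂ) ^ 2 = -4 * (Real.pi * x) ^ 2 := by
      linear_combination 4 * (Real.pi * x : ℂ) ^ 2 * Complex.I_sq
    rw [hI]
    field_simp
    ring

lemma sker_continuous : Continuous sker := by
  unfold sker
  exact (Real.continuous_sinc.comp (by fun_prop)).pow 2

lemma sker_nonneg (y : ℝ) : 0 ≤ sker y := sq_nonneg _

lemma sker_neg (y : ℝ) : sker (-y) = sker y := by
  unfold sker; rw [mul_neg, Real.sinc_neg]

lemma sker_le (y : ℝ) : sker y ≤ 2 * (1 + y ^ 2)⁻¹ := by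
  have hb : sker y ≤ 1 := by
    unfold sker
    have := Real.abs_sinc_le_one (Real.pi * y)
    rw [← sq_abs]; nlinarith [abs_nonneg (Real.sinc (Real.pi * y))]
  have hb2 : sker y * y ^ 2 ≤ 1 := by
    by_cases hy : y = 0
    · simp [hy]
    · unfold sker
      have hp := Real.pi_gt_three
      rw [Real.sinc_of_ne_zero (mul_ne_zero Real.pi_pos.ne' hy)]
      have : (Real.sin (Real.pi * y) / (Real.pi * y)) ^ 2 * y ^ 2
          = Real.sin (Real.pi * y) ^ 2 / Real.pi ^ 2 := by
        field_simp
      rw [this, div_le_one (by positivity)]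
      nlinarith [Real.sin_sq_le_one (Real.pi * y)]
  rw [← div_eq_mul_inv, le_div_iff₀ (by positivity)]
  linarith

lemma sker_integrable : Integrable sker := by
  refine (integrable_inv_one_add_sq.const_mul 2).mono' sker_continuous.aestronglyMeasurable ?_
  filter_upwards with y
  rw [Real.norm_of_nonneg (sker_nonneg y)]
  exact sker_le y

lemma tri_integrable : Integrable (fun u : ℝ => (tri u : ℂ)) := by
  apply Continuous.integrable_of_hasCompactSupport
  · exact Complex.continuous_ofReal.comp tri_continuous
  · apply HasCompactSupport.intro (isCompact_Icc (a := (-1:ℝ)) (b := 1))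
    intro u hu
    have : 1 ≤ |u| := by
      by_contra h2
      push Not at h2
      rw [abs_lt] at h2
      exact hu ⟨h2.1.le, h2.2.le⟩
    simp [tri_eq_zero this]

lemma re_integral_exp (g : ℝ → ℝ) (hg : Integrable g) (t : ℝ) :
    (∫ x : ℝ, Complex.exp (((t * x : ℝ) : ℂ) * Complex.I) * (g x : ℂ)).re
      = ∫ x : ℝ, g x * Real.cos (t * x) := by
  have hi : Integrable (fun x : ℝ => Complex.exp (((t * x : ℝ) : ℂ) * Complex.I) * (g x : ℂ)) := by
    refine hg.ofReal.bdd_mul (c := 1) ?_ ?_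
    · exact Continuous.aestronglyMeasurable (by fun_prop)
    · filter_upwards with x
      rw [Complex.norm_exp_ofReal_mul_I]
  have := integral_re hi
  simp only [RCLike.re_to_complex] at this
  rw [← this]
  congr 1
  ext x
  rw [mul_comm, Complex.re_ofReal_mul, Complex.exp_ofReal_mul_I_re]

open FourierTransform in
lemma integral_sker_cos (β : ℝ) :
    ∫ y : ℝ, sker y * Real.cos (2 * Real.pi * β * y) = tri β := by
  have hF : 𝓕 (fun u : ℝ => (tri u : ℂ)) = fun x => (sker x : ℂ) := funext fourier_tri
  have h := Continuous.fourierInv_fourier_eq (f := fun u : ℝ => (tri u : ℂ))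
    (Complex.continuous_ofReal.comp tri_continuous) tri_integrable
    (by rw [hF]; exact sker_integrable.ofReal)
  have h2 := congrFun h β
  rw [hF, Real.fourierInv_eq'] at h2
  have h3 := congrArg Complex.re h2
  rw [Complex.ofReal_re] at h3
  rw [← h3, ← re_integral_exp sker sker_integrable]
  congr 2
  ext x
  simp only [smul_eq_mul]
  congr 3
  simp
  ring

lemma fourierT_re (g : ℝ → ℝ) (hg : Integrable g) (α : ℝ) :
    (fourierT g α).re = ∫ x : ℝ, g x * Real.cos (2 * Real.pi * α * x) := by
  have := re_integral_exp g hg (-(2 * Real.pi * α))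
  have e : ∀ x : ℝ, Real.cos (-(2 * Real.pi * α) * x) = Real.cos (2 * Real.pi * α * x) := by
    intro x; rw [neg_mul, Real.cos_neg]
  simp_rw [e] at this
  rw [← this]
  unfold fourierT
  congr 2
  ext x
  rw [mul_comm]
  congr 3
  push_cast
  ring

/-- Scaled and modulated kernel. -/
def skerj (N : ℝ) (j : ℕ) (x : ℝ) : ℝ := sker (x / N) * Real.cos (j * (2 * Real.pi * (x / N)))

def triH (N : ℝ) (j : ℕ) (α : ℝ) : ℝ := N * ((tri (N * α - j) + tri (N * α + j)) / 2)

lemma skerj_continuous (N : ℝ) (j : ℕ) : Continuous (skerj N j) := by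
  unfold skerj
  exact (sker_continuous.comp (by fun_prop)).mul (by fun_prop)

lemma skerj_integrable {N : ℝ} (hN : 0 < N) (j : ℕ) : Integrable (skerj N j) := by
  refine (sker_integrable.comp_div hN.ne').mono (skerj_continuous N j).aestronglyMeasurable ?_
  filter_upwards with x
  unfold skerj
  rw [norm_mul]
  exact mul_le_of_le_one_right (norm_nonneg _) (Real.abs_cos_le_one _)

lemma sker_cos_integrable (t : ℝ) : Integrable (fun y => sker y * Real.cos (t * y)) := by
  refine sker_integrable.mono
    (sker_continuous.mul (by fun_prop)).aestronglyMeasurable ?_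
  filter_upwards with x
  rw [norm_mul]
  exact mul_le_of_le_one_right (norm_nonneg _) (Real.abs_cos_le_one _)

lemma integral_skerj {N : ℝ} (hN : 0 < N) (j : ℕ) (α : ℝ) :
    ∫ x : ℝ, skerj N j x * Real.cos (2 * Real.pi * α * x) = triH N j α := by
  have e : ∀ x : ℝ, skerj N j x * Real.cos (2 * Real.pi * α * x)
      = (fun y => (sker y * Real.cos (2 * Real.pi * (N * α - j) * y)
          + sker y * Real.cos (2 * Real.pi * (N * α + j) * y)) / 2) (x / N) := by
    intro x
    unfold skerj
    have e1 : 2 * Real.pi * α * x = N * α * (2 * Real.pi * (x / N)) := by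
      field_simp
    have e2 : 2 * Real.pi * (N * α - j) * (x / N)
      = N * α * (2 * Real.pi * (x / N)) - j * (2 * Real.pi * (x / N)) := by ring
    have e3 : 2 * Real.pi * (N * α + j) * (x / N)
      = N * α * (2 * Real.pi * (x / N)) + j * (2 * Real.pi * (x / N)) := by ring
    simp only []
    rw [e1, e2, e3, Real.cos_sub, Real.cos_add]
    ring
  simp_rw [e]
  rw [Measure.integral_comp_div (fun y => (sker y * Real.cos (2 * Real.pi * (N * α - j) * y)
          + sker y * Real.cos (2 * Real.pi * (N * α + j) * y)) / 2) N]
  rw [integral_div, integral_add (sker_cos_integrable _) (sker_cos_integrable _),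
    integral_sker_cos, integral_sker_cos, abs_of_pos hN]
  rfl

/-! ### Weights -/

lemma integral_triH_zero {N : ℝ} (hN : 1 ≤ N) :
    ∫ α in (-1:ℝ)..1, triH N 0 α * |α| = 1 / (3 * N) := by
  have hN0 : 0 < N := by linarith
  have e : ∀ α : ℝ, triH N 0 α * |α| = (fun u => tri u • |u|) (N * α) := by
    intro α
    simp only [triH, smul_eq_mul, Nat.cast_zero, sub_zero, add_zero, abs_mul, abs_of_pos hN0]
    ring
  simp_rw [e]
  rw [intervalIntegral.integral_comp_mul_left (fun u => tri u • |u|) hN0.ne']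
  rw [intervalIntegral.integral_eq_integral_of_support_subset
    ((tri_mul_support (fun u => |u|)).trans (Set.Ioc_subset_Ioc (by linarith) (by linarith)))]
  rw [integral_tri_full _ (by fun_prop)]
  have h1 : ∫ u in (-1:ℝ)..0, (1 + u) • |u| = 1 / 6 := by
    rw [intervalIntegral.integral_eq_sub_of_hasDerivAt
      (f := fun v : ℝ => -(v ^ 2 / 2 + v ^ 3 / 3))]
    · norm_num
    · intro v hv
      rw [Set.uIcc_of_le (by norm_num)] at hv
      have := ((((hasDerivAt_pow 2 v).div_const 2).add ((hasDerivAt_pow 3 v).div_const 3))).neg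
      convert! this using 1
      rw [abs_of_nonpos hv.2, smul_eq_mul]
      push_cast
      ring
    · apply Continuous.intervalIntegrable; fun_prop
  have h2 : ∫ u in (0:ℝ)..1, (1 - u) • |u| = 1 / 6 := by
    rw [intervalIntegral.integral_eq_sub_of_hasDerivAt
      (f := fun v : ℝ => (v ^ 2 / 2 - v ^ 3 / 3))]
    · norm_num
    · intro v hv
      rw [Set.uIcc_of_le (by norm_num)] at hv
      have := ((((hasDerivAt_pow 2 v).div_const 2).sub ((hasDerivAt_pow 3 v).div_const 3)))
      convert! this using 1
      rw [abs_of_nonneg hv.1, smul_eq_mul]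
      push_cast
      ring
    · apply Continuous.intervalIntegrable; fun_prop
  rw [h1, h2, smul_eq_mul]
  field_simp
  norm_num

lemma integral_tri_shift {N c : ℝ} (hN : 0 < N) (hc : 1 ≤ |c|) (hc' : |c| + 1 ≤ N) :
    ∫ α in (-1:ℝ)..1, N * tri (N * α - c) * |α| = |c| / N := by
  have e : ∀ α : ℝ, N * tri (N * α - c) * |α| = (fun u => tri u • |u + c|) (N * α - c) := by
    intro α
    simp only [smul_eq_mul, sub_add_cancel, abs_mul, abs_of_pos hN]
    ring
  simp_rw [e]
  have h1 := neg_abs_le c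
  have h2 := le_abs_self c
  rw [intervalIntegral.integral_comp_mul_sub (fun u => tri u • |u + c|) hN.ne']
  rw [intervalIntegral.integral_eq_integral_of_support_subset
    ((tri_mul_support (fun u => |u + c|)).trans (Set.Ioc_subset_Ioc (by linarith) (by linarith)))]
  rw [← intervalIntegral.integral_eq_integral_of_support_subset
    (tri_mul_support (fun u => |u + c|))]
  have key : ∀ s : ℝ, (∀ u ∈ Set.Icc (-1:ℝ) 1, |u + c| = s * (u + c)) →
      ∫ u in (-1:ℝ)..1, tri u • |u + c| = s * c := by
    intro s hs
    have : ∫ u in (-1:ℝ)..1, tri u • |u + c| = ∫ u in (-1:ℝ)..1, tri u • (s * (u + c)) := by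
      apply intervalIntegral.integral_congr
      intro u hu
      rw [Set.uIcc_of_le (by norm_num)] at hu
      simp only [hs u hu]
    rw [this, integral_tri_smul _ (by fun_prop)]
    have h1 : ∫ u in (-1:ℝ)..0, (1 + u) • (s * (u + c)) = s * (c / 2 - 1 / 6) := by
      rw [intervalIntegral.integral_eq_sub_of_hasDerivAt
        (f := fun v : ℝ => s * (c * v + (1 + c) * (v ^ 2 / 2) + v ^ 3 / 3))]
      · ring
      · intro v hv
        have := (((((hasDerivAt_id v).const_mul c).add
          (((hasDerivAt_pow 2 v).div_const 2).const_mul (1 + c))).add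
            ((hasDerivAt_pow 3 v).div_const 3))).const_mul s
        convert! this using 1
        rw [smul_eq_mul]
        push_cast
        ring
      · apply Continuous.intervalIntegrable; fun_prop
    have h2 : ∫ u in (0:ℝ)..1, (1 - u) • (s * (u + c)) = s * (c / 2 + 1 / 6) := by
      rw [intervalIntegral.integral_eq_sub_of_hasDerivAt
        (f := fun v : ℝ => s * (c * v + (1 - c) * (v ^ 2 / 2) - v ^ 3 / 3))]
      · ring
      · intro v hv
        have := (((((hasDerivAt_id v).const_mul c).add
          (((hasDerivAt_pow 2 v).div_const 2).const_mul (1 - c))).sub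
            ((hasDerivAt_pow 3 v).div_const 3))).const_mul s
        convert! this using 1
        rw [smul_eq_mul]
        push_cast
        ring
      · apply Continuous.intervalIntegrable; fun_prop
    rw [h1, h2]
    ring
  rcases le_abs.1 hc with h | h
  · rw [key 1 (fun u hu => by rw [one_mul]; exact abs_of_nonneg (by linarith [hu.1])),
      abs_of_nonneg (by linarith), smul_eq_mul]
    field_simp
  · rw [key (-1) (fun u hu => by rw [neg_one_mul]; exact abs_of_nonpos (by linarith [hu.2])),
      abs_of_nonpos (by linarith), smul_eq_mul]
    field_simp

lemma triH_continuous (N : ℝ) (j : ℕ) : Continuous (triH N j) := by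
  unfold triH
  have := tri_continuous
  fun_prop

lemma triH_nonneg {N : ℝ} (hN : 0 ≤ N) (j : ℕ) (α : ℝ) : 0 ≤ triH N j α := by
  unfold triH
  have h1 := tri_nonneg (N * α - j)
  have h2 := tri_nonneg (N * α + j)
  positivity

lemma integral_triH {N : ℝ} (j : ℕ) (hj : 1 ≤ j) (hN : (j:ℝ) + 1 ≤ N) :
    ∫ α in (-1:ℝ)..1, triH N j α * |α| = j / N := by
  have hj' : (1:ℝ) ≤ j := by exact_mod_cast hj
  have hN0 : 0 < N := by linarith
  have hcont := tri_continuous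
  have e : ∀ α : ℝ, triH N j α * |α|
      = (N * tri (N * α - (j:ℝ)) * |α| + N * tri (N * α - (-(j:ℝ))) * |α|) / 2 := by
    intro α; unfold triH; rw [sub_neg_eq_add]; ring
  simp_rw [e]
  have ha : |(j:ℝ)| = j := abs_of_nonneg (by linarith)
  rw [intervalIntegral.integral_div, intervalIntegral.integral_add
    (Continuous.intervalIntegrable (by fun_prop) _ _)
    (Continuous.intervalIntegrable (by fun_prop) _ _),
    integral_tri_shift hN0 (by rw [ha]; exact hj') (by rw [ha]; exact hN),
    integral_tri_shift hN0 (by rw [abs_neg, ha]; exact hj') (by rw [abs_neg, ha]; exact hN),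
    abs_neg, ha]
  ring

lemma triH_outside {N : ℝ} (hN : 0 < N) (j : ℕ) (hj : (j:ℝ) + 1 ≤ N) {α : ℝ} (hα : 1 ≤ |α|) :
    triH N j α = 0 := by
  have h : N ≤ |N * α| := by
    rw [abs_mul, abs_of_pos hN]; nlinarith
  have ha : |(j:ℝ)| = j := abs_of_nonneg (by positivity)
  have h1 : 1 ≤ |N * α - j| := by
    have := abs_sub_abs_le_abs_sub (N * α) j
    linarith
  have h2 : 1 ≤ |N * α + j| := by
    have := abs_sub_abs_le_abs_sub (N * α) (-j)
    rw [sub_neg_eq_add, abs_neg] at this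
    linarith
  unfold triH
  rw [tri_eq_zero h1, tri_eq_zero h2]; simp

/-! ### Autocorrelation of integer lists -/

/-- Linear functional `∑ Lᵢ F(i)` attached to a list of coefficients. -/
def ev : List ℤ → (ℕ → ℝ) → ℝ
  | [], _ => 0
  | a :: l, F => a * F 0 + ev l (fun n => F (n + 1))

def addL : List ℤ → List ℤ → List ℤ
  | [], l => l
  | a :: l, [] => a :: l
  | a :: l, b :: m => (a + b) :: addL l m

/-- Autocorrelation (positive lags counted twice). -/
def corr : List ℤ → List ℤ
  | [] => []
  | x :: t => addL ((x * x) :: t.map (fun y => 2 * x * y)) (corr t)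

lemma ev_addL (l m : List ℤ) (F : ℕ → ℝ) : ev (addL l m) F = ev l F + ev m F := by
  induction l generalizing m F with
  | nil => simp [addL, ev]
  | cons a l ih =>
    cases m with
    | nil => simp [addL, ev]
    | cons b m => simp only [addL, ev, ih]; push_cast; ring

lemma ev_map (c : ℤ) (l : List ℤ) (F : ℕ → ℝ) :
    ev (l.map (fun y => c * y)) F = c * ev l F := by
  induction l generalizing F with
  | nil => simp [ev]
  | cons a l ih => simp only [List.map_cons, ev, ih]; push_cast; ring

lemma ev_lin (p q : ℝ) (l : List ℤ) (F G : ℕ → ℝ) :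
    ev l (fun n => p * F n + q * G n) = p * ev l F + q * ev l G := by
  induction l generalizing F G with
  | nil => simp [ev]
  | cons a l ih =>
    simp only [ev]
    rw [ih (fun n => F (n + 1)) (fun n => G (n + 1))]
    ring

lemma ev_corr (b : List ℤ) (θ : ℝ) :
    ev (corr b) (fun n => Real.cos (n * θ))
      = ev b (fun n => Real.cos (n * θ)) ^ 2 + ev b (fun n => Real.sin (n * θ)) ^ 2 := by
  induction b with
  | nil => simp [corr, ev]
  | cons x t ih =>
    have hc : ev t (fun n => Real.cos ((n + 1 : ℕ) * θ))
        = Real.cos θ * ev t (fun n => Real.cos (n * θ))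
          + (-Real.sin θ) * ev t (fun n => Real.sin (n * θ)) := by
      rw [← ev_lin]
      congr 1; ext n
      rw [Nat.cast_succ, add_mul, one_mul, Real.cos_add]; ring
    have hs : ev t (fun n => Real.sin ((n + 1 : ℕ) * θ))
        = Real.sin θ * ev t (fun n => Real.cos (n * θ))
          + Real.cos θ * ev t (fun n => Real.sin (n * θ)) := by
      rw [← ev_lin]
      congr 1; ext n
      rw [Nat.cast_succ, add_mul, one_mul, Real.sin_add]; ring
    simp only [corr, ev_addL, ih, ev, ev_map, hc, hs]
    have := Real.sin_sq_add_cos_sq θ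
    push_cast
    simp only [zero_mul, Real.cos_zero, Real.sin_zero]
    linear_combination (-(ev t (fun n => Real.cos (n * θ))) ^ 2
      - (ev t (fun n => Real.sin (n * θ))) ^ 2) * this

lemma ev_eq_sum (l : List ℤ) (F : ℕ → ℝ) :
    ev l F = ∑ i ∈ Finset.range l.length, ((l.getD i 0 : ℤ) : ℝ) * F i := by
  induction l generalizing F with
  | nil => simp [ev]
  | cons a l ih =>
    rw [List.length_cons, Finset.sum_range_succ', ev, ih]
    simp [add_comm]

/-! ### The data -/

def bList : List ℤ := [
  2058492, 2810460, 3708478, 4725556, 5828879, 6915478, 8052902, 9094667, 10181342,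
  11096943, 12025696, 13017045, 14113442, 15162669, 16151966, 16861744, 16699936, 17334211,
  17532767, 17580336, 17394077, 17373968, 17566317, 17632125, 17618903, 17529698, 17382247,
  17218252, 16905265, 16610376, 16344288, 16115615, 15922466, 15751497, 15614203, 15503205,
  15404339, 15229373, 15014728, 14826266, 14752373, 14747951, 14900463, 15214210, 12588008,
  11602754, 10552827, 9390871, 8057774, 6797092, 5511403, 4422977, 3277722, 2440573,
  1652108, 759481, -284448, -1283758, -2286981, -2966308, -2277449, -2747885, -2600986,
  -2197309, -1404915, -914391, -935108, -908366, -816957, -743229, -672956, -747341,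
  -430309, -172939, 46833, 221423, 342920, 416315, 432842, 408526, 352283,
  357849, 373944, 328942, 135966, -161194, -651074, -1347600, -519843, -438662,
  -378652, -283279, -64635, 112185, 289156, 360110, 478888, 429839, 345196,
  344856, 467563, 615239, 857274, 1016715, 457439, 511519, 293196, -49586,
  -591011, -941927, -921794, -836911, -742001, -572337, -358703]

def aList : List ℤ := [
  10038741000409776, 20028663189680834, 19910698925288142, 19727293197606208, 19482321284599978,
  19179123178529016, 18823730088397528, 18422773975314690, 17981777779027988, 17504239911646198,
  16995149603307082, 16458660123994750, 15899206831943116, 15320516529222056, 14728188728253700,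
  14127384013878278, 13524415655446986, 12929269645246756, 12332337034843774, 11738564805285924,
  11149049680032328, 10565896372122432, 9986515300374624, 9409740787502558, 8836398047678016,
  8266057798471072, 7700323007327942, 7140112294240462, 6588262321088152, 6039349307807930,
  5497780052844788, 4966641702592746, 4448537003553160, 3946154142357976, 3461476665640922,
  2996551416111436, 2553220056294022, 2133523125429586, 1738847382809104, 1371147506747970,
  1032677636260536, 725423643064352, 450281295856566, 208201713732222, -21365070,
  -153839401927984, -271849489237070, -357588747796414, -414448797298560, -444868429039958,
  -453678406084260, -446275642248580, -426782369332690, -396882471231160, -359496132440360,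
  -316534946774858, -270006672340454, -220762110018486, -171500119706660, -124441545305546,
  -82930363407640, -54233347015634, -30262260940240, -13430382427170, -3247857266886,
  -62487250, -66448660, -67851290, -69189564, -72295028,
  -72585540, -72251944, -68811636, -67928882, -61681732,
  -58299288, -51314332, -47070308, -42683526, -37221050,
  -31327324, -24602222, -19556558, -15905072, -11832020,
  -8012678, -7329684, -5368174, -3074392, -6695077648252,
  -15493248778682, -25684357429466, -36687638877964, -48386124908130, -59823615200816,
  -69789161884280, -77554751265648, -83395912623080, -87147656042178, -89025336091394,
  -89208101872388, -88432165823352, -86664065706298, -83981297316036, -79961066378842,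
  -72520550321306, -64343833814578, -54985985074128, -44817560447902, -33912666987190,
  -23593503552990, -15251418031252, -8932351103092, -4372543138368, -1476774511752]

set_option maxRecDepth 100000 in
lemma corr_bList : corr bList = aList := by decide +kernel

lemma aList_length : aList.length = 115 := by decide +kernel

def aC (i : ℕ) : ℤ := aList.getD i 0

lemma aC_nonpos : ∀ i < 115, 44 ≤ i → aC i ≤ 0 := by decide +kernel

lemma aC_num : 10000 * (44 * 44 * 3 * aC 0 + aC 0 + 3 * ∑ i ∈ Finset.range 44, (i : ℤ) * aC i)
    < 13208 * 132 * ∑ i ∈ Finset.range 115, aC i := by decide +kernel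

lemma aC_sum_pos : 0 < ∑ i ∈ Finset.range 115, aC i := by decide +kernel

/-- The extremal candidate. -/
def gX (x : ℝ) : ℝ := ∑ i ∈ Finset.range 115, (aC i : ℝ) * skerj 44 i x

lemma gX_eq (x : ℝ) : gX x = sker (x / 44) *
    (ev bList (fun n => Real.cos (n * (2 * Real.pi * (x / 44)))) ^ 2
      + ev bList (fun n => Real.sin (n * (2 * Real.pi * (x / 44)))) ^ 2) := by
  rw [← ev_corr, corr_bList, ev_eq_sum, aList_length, Finset.mul_sum]
  unfold gX skerj
  apply Finset.sum_congr rfl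
  intro i _
  unfold aC
  ring

lemma gX_continuous : Continuous gX := by
  unfold gX
  exact continuous_finsetSum _ fun i _ => continuous_const.mul (skerj_continuous 44 i)

lemma gX_nonneg (x : ℝ) : 0 ≤ gX x := by
  rw [gX_eq]
  have := sker_nonneg (x / 44)
  positivity

lemma gX_neg (x : ℝ) : gX (-x) = gX x := by
  unfold gX skerj
  apply Finset.sum_congr rfl
  intro i _
  rw [neg_div, sker_neg, mul_neg, mul_neg, Real.cos_neg]

lemma gX_integrable : Integrable gX := by
  unfold gX
  exact integrable_finsetSum _ fun i _ => (skerj_integrable (by norm_num) i).const_mul _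

lemma gX_zero : gX 0 = ∑ i ∈ Finset.range 115, (aC i : ℝ) := by
  unfold gX skerj sker
  simp

lemma skerj_cos_integrable (i : ℕ) (t : ℝ) :
    Integrable (fun x => skerj 44 i x * Real.cos (t * x)) := by
  refine (skerj_integrable (N := 44) (by norm_num) i).mono
    ((skerj_continuous 44 i).mul (by fun_prop)).aestronglyMeasurable ?_
  filter_upwards with x
  rw [norm_mul]
  exact mul_le_of_le_one_right (norm_nonneg _) (Real.abs_cos_le_one _)

lemma gX_fourier (α : ℝ) :
    (fourierT gX α).re = ∑ i ∈ Finset.range 115, (aC i : ℝ) * triH 44 i α := by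
  rw [fourierT_re _ gX_integrable]
  unfold gX
  simp_rw [Finset.sum_mul, mul_assoc (aC _ : ℝ)]
  rw [integral_finsetSum _ fun i _ => (skerj_cos_integrable i _).const_mul _]
  apply Finset.sum_congr rfl
  intro i _
  rw [integral_const_mul, integral_skerj (by norm_num)]

lemma gX_memA1 : memA1 gX := by
  refine ⟨gX_continuous, gX_neg, gX_nonneg, gX_integrable, ?_⟩
  intro α hα
  rw [gX_fourier]
  apply Finset.sum_nonpos
  intro i hi
  by_cases h : i < 44
  · rw [triH_outside (by norm_num) i _ hα, mul_zero]
    have : i + 1 ≤ 44 := h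
    exact_mod_cast this
  · have h1 := aC_nonpos i (Finset.mem_range.1 hi) (by omega)
    exact mul_nonpos_of_nonpos_of_nonneg (by exact_mod_cast h1) (triH_nonneg (by norm_num) _ _)

lemma gX_zero_pos : 0 < gX 0 := by
  rw [gX_zero]
  exact_mod_cast aC_sum_pos

lemma triH_at_zero (i : ℕ) : triH 44 i 0 = if i = 0 then 44 else 0 := by
  split_ifs with h
  · subst h; simp [triH, tri]
  · have h1 : (1:ℝ) ≤ |(i:ℝ)| := by
      rw [abs_of_nonneg (by positivity)]; exact_mod_cast Nat.one_le_iff_ne_zero.2 h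
    simp [triH, tri_neg, tri_eq_zero h1]

lemma gX_rho : rho1 gX ≤ 44 * aC 0 + (aC 0 / 132 + ∑ i ∈ Finset.range 44, (aC i : ℝ) * (i / 44)) := by
  unfold rho1
  simp_rw [gX_fourier]
  apply add_le_add
  · simp_rw [triH_at_zero]
    simp [mul_comm]
  · simp_rw [Finset.sum_mul, mul_assoc]
    rw [intervalIntegral.integral_finsetSum]
    swap
    · intro i _
      have := triH_continuous 44 i
      apply Continuous.intervalIntegrable; fun_prop
    simp_rw [intervalIntegral.integral_const_mul]
    rw [← Finset.sum_range_add_sum_Ico _ (show 44 ≤ 115 by norm_num)]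
    have h2 : ∑ i ∈ Finset.Ico 44 115,
        (aC i : ℝ) * ∫ α in (-1:ℝ)..1, triH 44 i α * |α| ≤ 0 := by
      apply Finset.sum_nonpos
      intro i hi
      rw [Finset.mem_Ico] at hi
      have h1 := aC_nonpos i hi.2 hi.1
      apply mul_nonpos_of_nonpos_of_nonneg (by exact_mod_cast h1)
      apply intervalIntegral.integral_nonneg (by norm_num)
      intro α _
      exact mul_nonneg (triH_nonneg (by norm_num) _ _) (abs_nonneg _)
    have h1 : ∑ i ∈ Finset.range 44,
        (aC i : ℝ) * ∫ α in (-1:ℝ)..1, triH 44 i α * |α|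
        = aC 0 / 132 + ∑ i ∈ Finset.range 44, (aC i : ℝ) * (i / 44) := by
      rw [Finset.sum_range_succ', Finset.sum_range_succ' (n := 43), integral_triH_zero (by norm_num)]
      rw [Finset.sum_congr rfl (fun i hi => by
        rw [integral_triH (N := 44) (i + 1) (by omega) (by
          have : i + 1 + 1 ≤ 44 := by have := Finset.mem_range.1 hi; omega
          exact_mod_cast this)])]
      norm_num
      ring
    linarith

lemma gX_ratio : rho1 gX / gX 0 < 1.3208 := by
  rw [div_lt_iff₀ gX_zero_pos]
  refine gX_rho.trans_lt ?_
  rw [gX_zero]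
  have h := aC_num
  have h' : (10000 * (44 * 44 * 3 * aC 0 + aC 0 + 3 * ∑ i ∈ Finset.range 44, (i : ℝ) * aC i) : ℝ)
    < 13208 * 132 * ∑ i ∈ Finset.range 115, (aC i : ℝ) := by exact_mod_cast h
  have e : ∑ i ∈ Finset.range 44, (aC i : ℝ) * (i / 44)
      = (∑ i ∈ Finset.range 44, (i : ℝ) * aC i) / 44 := by
    rw [Finset.sum_div]
    apply Finset.sum_congr rfl
    intro i _
    ring
  rw [e]
  linarith

/-- `C₁ < 1.3208`: there exists a nonzero `g ∈ A₁` with `g(0) > 0` and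
`ρ₁(g)/g(0) < 1.3208`. -/
theorem statement16 :
    C1 < 1.3208 ∧
      ∃ g : ℝ → ℝ, memA1 g ∧ g ≠ 0 ∧ 0 < g 0 ∧ rho1 g / g 0 < 1.3208 := by
  have hne : gX ≠ 0 := by
    intro h
    have := gX_zero_pos
    rw [h] at this
    simp at this
  refine ⟨?_, gX, gX_memA1, hne, gX_zero_pos, gX_ratio⟩
  unfold C1
  by_cases hb : BddBelow {c : ℝ | ∃ g : ℝ → ℝ, memA1 g ∧ g ≠ 0 ∧ 0 < g 0 ∧ c = rho1 g / g 0}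
  · exact (csInf_le hb ⟨gX, gX_memA1, hne, gX_zero_pos, rfl⟩).trans_lt gX_ratio
  · rw [Real.sInf_of_not_bddBelow hb]
    norm_num

end
end

section
/- C₂ < 1.0650; that is, there exists g ∈ A₂, not identically zero, with g(0) > 0 and ρ₂(g)/g(0) < 1.0650. -/
open MeasureTheory Filter
open scoped Classical

noncomputable section

/-- The class `A₂` of continuous, even, non-negative functions `g ∈ L¹(ℝ)`
with `ĝ(α) ≤ 0` for `|α| ≥ 2`. -/
def memA2 (g : ℝ → ℝ) : Prop :=
  Continuous g ∧ (∀ x, g (-x) = g x) ∧ (∀ x, 0 ≤ g x) ∧ MeasureTheory.Integrable g ∧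
    ∀ α : ℝ, 2 ≤ |α| → (fourierT g α).re ≤ 0

/-- The functional `ρ₂(g) = ĝ(0) + ∫_{-1}^{1} ĝ(α)|α| dα + ∫_{1≤|α|≤2} ĝ(α) dα`. -/
def rho2 (g : ℝ → ℝ) : ℝ :=
  (fourierT g 0).re + (∫ α in (-1 : ℝ)..1, (fourierT g α).re * |α|) +
    ∫ α in {α : ℝ | 1 ≤ |α| ∧ |α| ≤ 2}, (fourierT g α).re

/-- The constant `C₂ = inf ρ₂(g)/g(0)` over nonzero `g ∈ A₂` with `g(0) > 0`. -/
def C2 : ℝ :=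
  sInf {c : ℝ | ∃ g : ℝ → ℝ, memA2 g ∧ g ≠ 0 ∧ 0 < g 0 ∧ c = rho2 g / g 0}


namespace LP2

/-! ### Integer polynomials as coefficient lists -/

/-- Evaluation of the polynomial with the given coefficient list (constant term first). -/
def ev : List ℤ → ℝ → ℝ
  | [], _ => 0
  | a :: l, x => a + x * ev l x

/-- Sum of coefficient lists. -/
def add : List ℤ → List ℤ → List ℤ
  | [], m => m
  | a :: l, [] => a :: l
  | a :: l, b :: m => (a + b) :: add l m

/-- Scalar multiple. -/
def smul (c : ℤ) : List ℤ → List ℤ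
  | [] => []
  | a :: l => (c * a) :: smul c l

/-- Product. -/
def mul : List ℤ → List ℤ → List ℤ
  | [], _ => []
  | a :: l, m => add (smul a m) (0 :: mul l m)

/-- Derivative. -/
def der : List ℤ → List ℤ
  | [] => []
  | _ :: l => add l (0 :: der l)

/-- Composition with `X + c`. -/
def shift (c : ℤ) : List ℤ → List ℤ
  | [] => []
  | a :: l => add [a] (add (0 :: shift c l) (smul c (shift c l)))

/-- The operator corresponding to multiplication by `y ^ 2` on the Fourier side. -/
def tr (q : List ℤ) : List ℤ :=
  add (add q (smul (-2) (der q)))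
    (0 :: add (smul (-1) q) (add (smul 4 (der q)) (smul (-4) (der (der q)))))

/-- The polynomial part of the Fourier transform. -/
def ft : List ℤ → List ℤ
  | [] => []
  | a :: l => add [a] (tr (ft l))

/-- All coefficients are nonnegative. -/
def nn : List ℤ → Bool
  | [] => true
  | a :: l => decide (0 ≤ a) && nn l

/-- All coefficients vanish. -/
def zz : List ℤ → Bool
  | [] => true
  | a :: l => (a == 0) && zz l

lemma ev_add (l m : List ℤ) (x : ℝ) : ev (add l m) x = ev l x + ev m x := by
  induction l generalizing m with
  | nil => simp [add, ev]
  | cons a l ih =>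
    cases m with
    | nil => simp [add, ev]
    | cons b m => simp only [add, ev, ih]; push_cast; ring

lemma ev_smul (c : ℤ) (l : List ℤ) (x : ℝ) : ev (smul c l) x = c * ev l x := by
  induction l with
  | nil => simp [smul, ev]
  | cons a l ih => simp only [smul, ev, ih]; push_cast; ring

lemma ev_mul (l m : List ℤ) (x : ℝ) : ev (mul l m) x = ev l x * ev m x := by
  induction l with
  | nil => simp [mul, ev]
  | cons a l ih => simp only [mul, ev, ih, ev_add, ev_smul]; push_cast; ring

lemma ev_shift (c : ℤ) (l : List ℤ) (x : ℝ) : ev (shift c l) x = ev l (x + c) := by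
  induction l with
  | nil => simp [shift, ev]
  | cons a l ih => simp only [shift, ev, ih, ev_add, ev_smul]; push_cast; ring

lemma hasDerivAt_ev (l : List ℤ) (x : ℝ) : HasDerivAt (ev l) (ev (der l) x) x := by
  induction l with
  | nil => simpa [der, ev] using! hasDerivAt_const x (0 : ℝ)
  | cons a l ih =>
    have h := ((hasDerivAt_id x).mul ih).const_add (a : ℝ)
    refine h.congr_deriv ?_
    simp [der, ev_add, ev]

lemma ev_tr (q : List ℤ) (s : ℝ) :
    ev (tr q) s = (1 - s) * ev q s + (4 * s - 2) * ev (der q) s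
      - 4 * s * ev (der (der q)) s := by
  simp only [tr, ev_add, ev_smul, ev]; push_cast; ring

lemma continuous_ev (l : List ℤ) : Continuous (ev l) :=
  continuous_iff_continuousAt.2 fun x => (hasDerivAt_ev l x).continuousAt

lemma ev_nonneg {l : List ℤ} (h : nn l = true) {x : ℝ} (hx : 0 ≤ x) : 0 ≤ ev l x := by
  induction l with
  | nil => simp [ev]
  | cons a l ih =>
    simp only [nn, Bool.and_eq_true, decide_eq_true_eq] at h
    have h1 : (0 : ℝ) ≤ a := by exact_mod_cast h.1
    have h2 := ih h.2
    simp only [ev]; positivity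

lemma ev_zero {l : List ℤ} (h : zz l = true) (x : ℝ) : ev l x = 0 := by
  induction l with
  | nil => simp [ev]
  | cons a l ih =>
    simp only [zz, Bool.and_eq_true, beq_iff_eq] at h
    simp [ev, h.1, ih h.2]

/-! ### The Fourier transform -/

open Real FourierTransform

/-- The test function attached to a coefficient list. -/
def gf (l : List ℤ) (x : ℝ) : ℝ := ev l (π ^ 2 * x ^ 2) * rexp (-(π ^ 2 / 2) * x ^ 2)

lemma integrable_aux (l : List ℤ) (n : ℕ) : Integrable fun x : ℝ => x ^ n * gf l x := by
  induction l generalizing n with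
  | nil => simp [gf, ev]
  | cons a l ih =>
    have h1 : Integrable fun x : ℝ => x ^ n * rexp (-(π ^ 2 / 2) * x ^ 2) := by
      have := integrable_rpow_mul_exp_neg_mul_sq (b := π ^ 2 / 2) (by positivity) (s := n)
        (by have : (0 : ℝ) ≤ n := n.cast_nonneg
            linarith)
      simpa only [Real.rpow_natCast] using this
    have h2 := (h1.const_mul (a : ℝ)).add ((ih (n + 2)).const_mul (π ^ 2))
    refine h2.congr (Filter.Eventually.of_forall fun x => ?_)
    simp only [gf, ev, Pi.add_apply]; ring

lemma integrable_gf (l : List ℤ) : Integrable (gf l) := by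
  simpa using integrable_aux l 0

/-- Explicit transform. -/
def hat (q : List ℤ) (α : ℝ) : ℝ := √(2 / π) * (ev q (4 * α ^ 2) * rexp (-2 * α ^ 2))

lemma hasDerivAt_exp2 (α : ℝ) :
    HasDerivAt (fun α : ℝ => rexp (-2 * α ^ 2)) (-4 * α * rexp (-2 * α ^ 2)) α := by
  have h : HasDerivAt (fun α : ℝ => -2 * α ^ 2) (-4 * α) α := by
    refine (((hasDerivAt_id α).pow 2).const_mul (-2 : ℝ)).congr_deriv ?_
    simp; ring
  refine h.exp.congr_deriv ?_
  ring

lemma hasDerivAt_evsq (q : List ℤ) (α : ℝ) :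
    HasDerivAt (fun α : ℝ => ev q (4 * α ^ 2)) (8 * α * ev (der q) (4 * α ^ 2)) α := by
  have h : HasDerivAt (fun α : ℝ => 4 * α ^ 2) (8 * α) α := by
    refine (((hasDerivAt_id α).pow 2).const_mul (4 : ℝ)).congr_deriv ?_
    simp; ring
  refine ((hasDerivAt_ev q (4 * α ^ 2)).comp α h).congr_deriv ?_
  ring

/-- First derivative of `hat`. -/
def hat1 (q : List ℤ) (α : ℝ) : ℝ :=
  √(2 / π) * ((8 * α * ev (der q) (4 * α ^ 2) - 4 * α * ev q (4 * α ^ 2)) * rexp (-2 * α ^ 2))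

lemma hasDerivAt_hat (q : List ℤ) (α : ℝ) : HasDerivAt (hat q) (hat1 q α) α := by
  refine (((hasDerivAt_evsq q α).mul (hasDerivAt_exp2 α)).const_mul (√(2 / π))).congr_deriv ?_
  simp only [hat1]; ring

lemma hasDerivAt_hat1 (q : List ℤ) (α : ℝ) : HasDerivAt (hat1 q) (-4 * hat (tr q) α) α := by
  have h8 : HasDerivAt (fun α : ℝ => 8 * α) 8 α := by
    simpa using (hasDerivAt_id α).const_mul (8 : ℝ)
  have h4 : HasDerivAt (fun α : ℝ => 4 * α) 4 α := by
    simpa using (hasDerivAt_id α).const_mul (4 : ℝ)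
  refine ((((h8.mul (hasDerivAt_evsq (der q) α)).sub (h4.mul (hasDerivAt_evsq q α))).mul
    (hasDerivAt_exp2 α)).const_mul (√(2 / π))).congr_deriv ?_
  simp only [hat, ev_tr, Pi.mul_apply, Pi.sub_apply]; ring

/-- Complex valued version of `gf`. -/
def gc (l : List ℤ) (x : ℝ) : ℂ := (gf l x : ℂ)

lemma integrable_gc (l : List ℤ) : Integrable (gc l) := (integrable_gf l).ofReal

lemma integrable_gc_aux (l : List ℤ) (n : ℕ) : Integrable fun x : ℝ => (x : ℂ) ^ n * gc l x := by
  refine (integrable_aux l n).ofReal.congr (Filter.Eventually.of_forall fun x => ?_)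
  simp [gc]

lemma fourier_step (l q : List ℤ) (h : ∀ α, 𝓕 (gc l) α = (hat q α : ℂ)) (α : ℝ) :
    𝓕 (fun x : ℝ => (π : ℂ) ^ 2 * (x : ℂ) ^ 2 * gc l x) α = (hat (tr q) α : ℂ) := by
  have hF : 𝓕 (gc l) = fun α => (hat q α : ℂ) := funext h
  have i1 : Integrable (fun x : ℝ => x • gc l x) := by
    simpa using integrable_gc_aux l 1
  have e1 : 𝓕 (fun x : ℝ ↦ (-2 * π * Complex.I * x) • gc l x) = fun α => (hat1 q α : ℂ) := by
    funext α
    have := Real.hasDerivAt_fourier (integrable_gc l) i1 α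
    rw [hF] at this
    exact this.unique (hasDerivAt_hat q α).ofReal_comp
  have i2 : Integrable (fun x : ℝ ↦ (-2 * π * Complex.I * x) • gc l x) := by
    refine ((integrable_gc_aux l 1).const_mul (-2 * π * Complex.I)).congr
      (Filter.Eventually.of_forall fun x => ?_)
    simp; ring
  have i3 : Integrable (fun x : ℝ ↦ x • ((-2 * π * Complex.I * x) • gc l x)) := by
    refine ((integrable_gc_aux l 2).const_mul (-2 * π * Complex.I)).congr
      (Filter.Eventually.of_forall fun x => ?_)
    simp; ring
  have h2 := Real.hasDerivAt_fourier i2 i3 α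
  rw [e1] at h2
  have h3 := h2.unique (hasDerivAt_hat1 q α).ofReal_comp
  have h4 : 𝓕 (fun x : ℝ ↦ (-2 * π * Complex.I * x) • ((-2 * π * Complex.I * x) • gc l x)) α
      = -4 * 𝓕 (fun x : ℝ => (π : ℂ) ^ 2 * (x : ℂ) ^ 2 * gc l x) α := by
    rw [Real.fourier_real_eq_integral_exp_smul, Real.fourier_real_eq_integral_exp_smul,
      ← integral_const_mul]
    congr 1
    funext x
    simp only [smul_eq_mul]
    linear_combination (Complex.exp (↑(-2 * π * x * α) * Complex.I) * 4 * π ^ 2 * x ^ 2 * gc l x)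
      * Complex.I_sq
  rw [h4] at h3
  push_cast at h3
  linear_combination (-1 / 4 : ℂ) * h3

lemma fourier_one (α : ℝ) :
    𝓕 (fun x : ℝ => ((rexp (-(π ^ 2 / 2) * x ^ 2) : ℝ) : ℂ)) α = (hat [1] α : ℂ) := by
  have h := congrFun (fourier_gaussian_pi (b := ((π / 2 : ℝ) : ℂ))
    (by rw [Complex.ofReal_re]; positivity)) α
  have e : (fun x : ℝ => Complex.exp (-π * ((π / 2 : ℝ) : ℂ) * (x : ℂ) ^ 2)) =
      fun x : ℝ => ((rexp (-(π ^ 2 / 2) * x ^ 2) : ℝ) : ℂ) := by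
    funext x
    push_cast
    congr 1; ring
  rw [e] at h
  rw [h]
  have h2 : ((π / 2 : ℝ) : ℂ) ^ (1 / 2 : ℂ) = ((√(π / 2) : ℝ) : ℂ) := by
    rw [Real.sqrt_eq_rpow, Complex.ofReal_cpow (by positivity)]
    norm_num
  rw [h2]
  have h3 : √(2 / π) = 1 / √(π / 2) := by
    rw [one_div, ← Real.sqrt_inv, inv_div]
  have h4 : (-(π : ℂ)) / ((π / 2 : ℝ) : ℂ) * (α : ℂ) ^ 2 = ((-2 * α ^ 2 : ℝ) : ℂ) := by
    have : (π : ℂ) ≠ 0 := by exact_mod_cast Real.pi_ne_zero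
    push_cast
    field_simp
  rw [h4, hat, h3]
  simp [ev]

lemma fourier_gc (l : List ℤ) (α : ℝ) : 𝓕 (gc l) α = (hat (ft l) α : ℂ) := by
  induction l generalizing α with
  | nil =>
    rw [Real.fourier_real_eq_integral_exp_smul]
    simp [gc, gf, ev, ft, hat]
  | cons a l ih =>
    have h1 := fourier_step l (ft l) ih α
    have h2 := fourier_one α
    have hsplit : 𝓕 (gc (a :: l)) α =
        (a : ℂ) * 𝓕 (fun x : ℝ => ((rexp (-(π ^ 2 / 2) * x ^ 2) : ℝ) : ℂ)) α +
        𝓕 (fun x : ℝ => (π : ℂ) ^ 2 * (x : ℂ) ^ 2 * gc l x) α := by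
      have hA : Integrable (fun x : ℝ => ((rexp (-(π ^ 2 / 2) * x ^ 2) : ℝ) : ℂ)) := by
        refine (integrable_gc [1]).congr (Filter.Eventually.of_forall fun x => ?_)
        simp [gc, gf, ev]
      have hB : Integrable (fun x : ℝ => (π : ℂ) ^ 2 * (x : ℂ) ^ 2 * gc l x) := by
        simpa [mul_assoc] using (integrable_gc_aux l 2).const_mul ((π : ℂ) ^ 2)
      have hA2 := (Real.fourierIntegral_convergent_iff α).2 hA
      have hB2 := (Real.fourierIntegral_convergent_iff α).2 hB
      rw [Real.fourier_eq, Real.fourier_eq, Real.fourier_eq, ← integral_const_mul,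
        ← integral_add (hA2.const_mul _) hB2]
      congr 1
      funext x
      simp only [gc, gf, ev, Circle.smul_def, smul_eq_mul]
      push_cast
      ring
    rw [hsplit, h1, h2]
    simp only [ft, hat, ev_add, ev]
    push_cast
    ring

lemma fourierT_gf (l : List ℤ) (α : ℝ) : fourierT (gf l) α = (hat (ft l) α : ℂ) := by
  rw [← fourier_gc, Real.fourier_real_eq_integral_exp_smul, fourierT]
  congr 1
  funext x
  rw [smul_eq_mul, mul_comm, gc]
  congr 2
  push_cast; ring

/-! ### Numerical data -/

/-- Coefficients of the test function. -/
def cP : List ℤ :=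
  [100000000000000000000000000000000000000000000000000,
   -51845175881537981518162958450052113726660910637594,
   -419331936783084795499920616346116271793842299125,
   3666935160008069891260194955067292801541299870741,
   -586607692916496667736810646173244246561321323988,
   77880542732486890154626046241671527753869042627,
   -30100925029472909747581867687000649598476596470,
   9054979208369009745709086588477822438159393960,
   -1829772944601969677222361445041041585186766075,
   269221762385122874489835061210479717613458823,
   -29429262064175377543082310353272561652573761,
   2400600518036949517445484382607452493564166,
   -146497068137389600875419747350950861757005,
   6671704229679509442753557039624028477596,
   -224338447094403454740992559167920615788,
   5454377602346398282313016613501564626,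
   -92595399912945190803634302071092060,
   1034618056694197926829009795023456,
   -6800460955690732955180943331753,
   19831760220837038905120348289]

/-- Coefficients of its transform. -/
def cQ : List ℤ :=
  [65028536388894282364083424305581552804804969460771,
   18292350015019751949564031015540463052959860343284,
   4007748388014049405566717471441160529028410482185,
   -130177807467137812613216192801097434776310014452,
   341354785583637295737195592489544471291471836782,
   -155839344654676889492049564324177908086372006107,
   54157582196065884434718244688041221503525921790,
   -13754912679996345636011666225328925991924301450,
   2616213498979917796234356460691077634615558454,
   -374724111258862267993363340734779510265341303,
   40316294528726335998992969595401045450083145,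
   -3249804370128191547838876920082639175062386,
   195368021027088004205574779863564681941845,
   -8696246006206677316348787972565133484222,
   283215800086132473198036828472839697362,
   -6616592917264839311035257654409843334,
   107319326680921232997038015588707496,
   -1141971796712294245409391022876671,
   7141266479557705395118661515414,
   -19831760220837038905120348289]

/-- Square certificate for `cP`. -/
def cA : List ℤ :=
  [-9999999749999996874999922,
   24163319028297761979611839,
   -14090393139943019827444917,
   3506665846332275430738558,
   -448742022304559583903133,
   32108394491650853247089,
   -1328948842087380861420,
   31403394053941138188,
   -390210652663338719,
   1959678780249220]

/-- Square certificate for `cP`. -/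
def cB : List ℤ :=
  [20770681021640999455822182,
   -20848935426728664386568341,
   7704693717479477660704399,
   -1355195678258624030365638,
   128926028458874811556524,
   -7036430403811834082170,
   223692977865073555296,
   -4035685306877885770,
   37780154616454177,
   -140825282326857]

/-- Square certificate for `cQ`. -/
def cC : List ℤ :=
  [-2236067977499789595246,
   104791731544205089811791927,
   -123096181098371470046008877,
   37940706589712905241074819,
   -4925234664501103321040554,
   323867586073311524554774,
   -11487023788664134123145,
   217149972588335771133,
   -1965334538711853019,
   5960620292011077]

/-- Square certificate for `cQ`. -/
def cD : List ℤ :=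
  [37314161939647428797054059,
   -141626559377516916033767700,
   77606897987622195771616332,
   -14997566010773375768538900,
   1366978011694845464652740,
   -65824273970880100630469,
   1715239400465200244279,
   -22928728540512579035,
   130095267822334329,
   -140825282326857]

/-- Antiderivative data on `[0, 1]`. -/
def cG : List ℤ :=
  [-294324470275957239206731332376336391548537463047462,
   -82133698749084337239282241882586642969463762062960,
   -11387249679761208335038544962876429215886010344098,
   -561958817288851587317518336665684692971531563288,
   -102789304027890901567993840283484945315518949024,
   57992026713938368990639734469560399726742472454,
   -21140555216284617499454949514899618037166794980,
   6226757798274796526427252847227344640706074900,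
   -1330191722607368421599754975214406708946408000,
   216790848630692620603830997009319364460261606,
   -26632868694351595769144784223011982803521050,
   2454532743777321646765507043990459458938420,
   -168544833186627560371343616507284120466098,
   8545815725674940309223305508455586285292,
   -315952724526371940124081087024095738684,
   8349295854863100209066418997386121868,
   -152621561864580575406378009732298900,
   1824032102860643840814647689562238,
   -12775319182331795833448176560864,
   39663520441674077810240696578]

/-- Antiderivative data on `[1, 2]`. -/
def cH : List ℤ :=
  [-34971463611105717635916575694418447195195030539229,
   -5559704532028655228784181559625994714078390065315,
   -310391228802921164643492817636966837009995916626,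
   -62938433752865568179529858634009181683757990154,
   30935150203419080839740637095059476623079316292,
   -11354926768296164422937175202647130133026608165,
   3292511955982286154752389960414930105423024125,
   -697493381600937298750618417660933059100085155,
   112865889257587088087278708413537916206792547,
   -13782011684277641047688664859012715476765724,
   1263537278307080711966871654113729998729401,
   -86359438774830905907478489824735181579695,
   4360343290090283931923851601553180014486,
   -160588989485792347571293939667109387768,
   4228510710356556056094582372611389986,
   -77034909900267201772279847799950108,
   917709599413758521962368720871436,
   -6407491351386734955629208628721,
   19831760220837038905120348289]

lemma ft_cP : ft cP = cQ := by decide +kernel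

lemma certP : nn (add cP (smul (-1) (add (mul cA cA) (0 :: mul cB cB)))) = true := by
  decide +kernel

lemma certQ : nn (add (smul (-1) (shift 16 cQ))
    (smul (-1) (add (mul cC cC) (0 :: mul cD cD)))) = true := by
  decide +kernel

lemma certG : zz (add (smul 2 (der cG)) (add (smul (-1) cG) (smul (-2) cQ))) = true := by
  decide +kernel

lemma certH : zz (add (add [100000000000000000000000000000000000000000000000000] cH)
    (add (smul (-1) cQ) (0 :: add (smul 2 (der cH)) (smul (-1) cH)))) = true := by
  decide +kernel

lemma gf_nonneg (x : ℝ) : 0 ≤ gf cP x := by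
  have ht : 0 ≤ π ^ 2 * x ^ 2 := by positivity
  have h := ev_nonneg certP ht
  simp only [ev_add, ev_smul, ev_mul, ev] at h
  push_cast at h
  have : 0 ≤ ev cP (π ^ 2 * x ^ 2) := by
    nlinarith [mul_self_nonneg (ev cA (π ^ 2 * x ^ 2)),
      mul_nonneg ht (mul_self_nonneg (ev cB (π ^ 2 * x ^ 2)))]
  exact mul_nonneg this (Real.exp_pos _).le

lemma hat_nonpos (α : ℝ) (hα : 2 ≤ |α|) : hat cQ α ≤ 0 := by
  have hv : 0 ≤ 4 * α ^ 2 - 16 := by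
    have := abs_nonneg α
    nlinarith [sq_abs α]
  have h := ev_nonneg certQ hv
  simp only [ev_add, ev_smul, ev_mul, ev_shift, ev] at h
  push_cast at h
  rw [sub_add_cancel] at h
  have : ev cQ (4 * α ^ 2) ≤ 0 := by
    nlinarith [mul_self_nonneg (ev cC (4 * α ^ 2 - 16)),
      mul_nonneg hv (mul_self_nonneg (ev cD (4 * α ^ 2 - 16)))]
  exact mul_nonpos_of_nonneg_of_nonpos (Real.sqrt_nonneg _)
    (mul_nonpos_of_nonpos_of_nonneg this (Real.exp_pos _).le)

lemma continuous_gf (l : List ℤ) : Continuous (gf l) := by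
  have := continuous_ev l
  unfold gf
  fun_prop

lemma continuous_hat (l : List ℤ) : Continuous (hat l) := by
  have := continuous_ev l
  unfold hat
  fun_prop

lemma hat_neg (l : List ℤ) (α : ℝ) : hat l (-α) = hat l α := by simp [hat]

lemma memA2_gf : memA2 (gf cP) := by
  refine ⟨continuous_gf _, fun x => by simp [gf], gf_nonneg, integrable_gf _, fun α hα => ?_⟩
  rw [fourierT_gf, ft_cP, Complex.ofReal_re]
  exact hat_nonpos α hα

/-! ### The integrals -/

lemma integral_one : ∫ α in (0 : ℝ)..1, hat cQ α * α =
    √(2 / π) * ((ev cG 4 * rexp (-2) - ev cG 0) / 8) := by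
  have hd : ∀ α : ℝ, HasDerivAt
      (fun α => √(2 / π) * (ev cG (4 * α ^ 2) * rexp (-2 * α ^ 2) / 8)) (hat cQ α * α) α := by
    intro α
    refine ((((hasDerivAt_evsq cG α).mul (hasDerivAt_exp2 α)).div_const 8).const_mul
      (√(2 / π))).congr_deriv ?_
    have h := ev_zero certG (4 * α ^ 2)
    simp only [ev_add, ev_smul] at h
    push_cast at h
    simp only [hat]
    linear_combination (√(2 / π) * α * rexp (-2 * α ^ 2) / 2) * h
  rw [intervalIntegral.integral_eq_sub_of_hasDerivAt (fun α _ => hd α)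
    (((continuous_hat cQ).mul continuous_id).intervalIntegrable _ _)]
  norm_num
  ring

lemma integral_two : ∫ α in (1 : ℝ)..2, hat cQ α =
    √(2 / π) * (2 * ev cH 16 * rexp (-8) - ev cH 4 * rexp (-2) +
      10 ^ 50 * ∫ α in (1 : ℝ)..2, rexp (-2 * α ^ 2)) := by
  have hd : ∀ α : ℝ, HasDerivAt
      (fun α => √(2 / π) * (α * ev cH (4 * α ^ 2) * rexp (-2 * α ^ 2)))
      (hat cQ α - √(2 / π) * 10 ^ 50 * rexp (-2 * α ^ 2)) α := by
    intro α
    refine ((((hasDerivAt_id α).mul (hasDerivAt_evsq cH α)).mul (hasDerivAt_exp2 α)).const_mul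
      (√(2 / π))).congr_deriv ?_
    have h := ev_zero certH (4 * α ^ 2)
    simp only [ev_add, ev_smul, ev] at h
    push_cast at h
    simp only [hat, Pi.mul_apply, id]
    linear_combination (√(2 / π) * rexp (-2 * α ^ 2)) * h
  have hc : Continuous fun α : ℝ => √(2 / π) * 10 ^ 50 * rexp (-2 * α ^ 2) := by fun_prop
  have h1 := intervalIntegral.integral_eq_sub_of_hasDerivAt (a := 1) (b := 2) (fun α _ => hd α)
    (((continuous_hat cQ).sub hc).intervalIntegrable _ _)
  rw [intervalIntegral.integral_sub ((continuous_hat cQ).intervalIntegrable _ _)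
    (hc.intervalIntegrable _ _), intervalIntegral.integral_const_mul] at h1
  norm_num at h1 ⊢
  linear_combination h1

lemma gauss_bound : ∫ α in (1 : ℝ)..2, rexp (-2 * α ^ 2) ≤
    0.21068783 * rexp (-2) - 0.118177025 * rexp (-8) := by
  let p : ℝ → ℝ := fun v => -0.210687830 + 0.157249678 * v - 0.106355585 * v ^ 2
    + 0.063812976 * v ^ 3 - 0.029594685 * v ^ 4 + 0.007398421 * v ^ 5
  let dp : ℝ → ℝ := fun v => 0.157249678 - 0.212711170 * v
    + 0.191438928 * v ^ 2 - 0.118378740 * v ^ 3 + 0.036992105 * v ^ 4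
  have hp : ∀ v, HasDerivAt p (dp v) v := by
    intro v
    have h := ((((((hasDerivAt_id v).const_mul (0.157249678 : ℝ)).const_add
      (-0.210687830 : ℝ)).sub (((hasDerivAt_id v).pow 2).const_mul (0.106355585 : ℝ))).add
      (((hasDerivAt_id v).pow 3).const_mul (0.063812976 : ℝ))).sub
      (((hasDerivAt_id v).pow 4).const_mul (0.029594685 : ℝ))).add
      (((hasDerivAt_id v).pow 5).const_mul (0.007398421 : ℝ))
    refine h.congr_deriv ?_
    simp only [dp, id]
    norm_num
    ring
  have hd : ∀ α : ℝ, HasDerivAt (fun α => p (α - 1) * rexp (-2 * α ^ 2))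
      ((dp (α - 1) - 4 * α * p (α - 1)) * rexp (-2 * α ^ 2)) α := by
    intro α
    have h1 : HasDerivAt (fun α => p (α - 1)) (dp (α - 1)) α := (hp (α - 1)).comp_sub_const α 1
    refine (h1.mul (hasDerivAt_exp2 α)).congr_deriv ?_
    ring
  have hcont : Continuous fun α : ℝ => (dp (α - 1) - 4 * α * p (α - 1)) * rexp (-2 * α ^ 2) := by
    simp only [p, dp]
    fun_prop
  have hi := intervalIntegral.integral_eq_sub_of_hasDerivAt (a := 1) (b := 2) (fun α _ => hd α)
    (hcont.intervalIntegrable _ _)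
  have hc2 : Continuous fun α : ℝ => rexp (-2 * α ^ 2) := by fun_prop
  calc ∫ α in (1 : ℝ)..2, rexp (-2 * α ^ 2)
      ≤ ∫ α in (1 : ℝ)..2, (dp (α - 1) - 4 * α * p (α - 1)) * rexp (-2 * α ^ 2) := by
        refine intervalIntegral.integral_mono_on (by norm_num) (hc2.intervalIntegrable _ _)
          (hcont.intervalIntegrable _ _) fun α hα => ?_
        obtain ⟨v, rfl⟩ : ∃ v, α = 1 + v := ⟨α - 1, by ring⟩
        have h0 : 0 ≤ v := by linarith [hα.1]
        have h1 : 0 ≤ 1 - v := by linarith [hα.2]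
        have key : dp v - 4 * (1 + v) * p v - 1 =
            0.000115604 * (v * (1 - v)) * (16 * v ^ 2 - 16 * v + 3) ^ 2 +
            (998 + 1002 * v + 976 * v ^ 2 + 1104 * v ^ 3 + 797 * v ^ 4 + 1184 * v ^ 5
              + 940 * v ^ 6) / 10 ^ 9 := by
          simp only [p, dp]; ring
        have hpos : 0 ≤ dp v - 4 * (1 + v) * p v - 1 := by
          rw [key]; positivity
        have he := Real.exp_pos (-2 * (1 + v) ^ 2)
        rw [add_sub_cancel_left]
        nlinarith
    _ = 0.21068783 * rexp (-2) - 0.118177025 * rexp (-8) := by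
        rw [hi]
        simp only [p]
        norm_num
        ring

lemma exp_two_bounds : 0.135335283 < rexp (-2) ∧ rexp (-2) < 0.135335284 := by
  have h1 := Real.exp_one_gt_d9
  have h2 := Real.exp_one_lt_d9
  have h3 : rexp (-2) * (rexp 1 * rexp 1) = 1 := by
    rw [← Real.exp_add, ← Real.exp_add]; norm_num
  have h4 := Real.exp_pos (-2)
  have h5 : 2.7182818283 * 2.7182818283 < rexp 1 * rexp 1 := by nlinarith
  have h6 : rexp 1 * rexp 1 < 2.7182818286 * 2.7182818286 := by nlinarith
  constructor <;> nlinarith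

lemma exp_eight_bounds : 0.00033546262 < rexp (-8) ∧ rexp (-8) < 0.00033546264 := by
  obtain ⟨h1, h2⟩ := exp_two_bounds
  have h : rexp (-8) = rexp (-2) ^ 4 := by rw [← Real.exp_nat_mul]; norm_num
  rw [h]
  constructor
  · calc (0.00033546262 : ℝ) < 0.135335283 ^ 4 := by norm_num
      _ < rexp (-2) ^ 4 := by gcongr
  · calc rexp (-2) ^ 4 < 0.135335284 ^ 4 := by gcongr
      _ < 0.00033546264 := by norm_num

lemma rho2_eq : rho2 (gf cP) =
    hat cQ 0 + 2 * (∫ α in (0 : ℝ)..1, hat cQ α * α) + 2 * ∫ α in (1 : ℝ)..2, hat cQ α := by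
  have hre : ∀ α, (fourierT (gf cP) α).re = hat cQ α := fun α => by
    rw [fourierT_gf, ft_cP, Complex.ofReal_re]
  have hcabs : Continuous fun α : ℝ => hat cQ α * |α| := (continuous_hat cQ).mul continuous_abs
  simp only [rho2, hre]
  have hpos : ∫ α in (0 : ℝ)..1, hat cQ α * |α| = ∫ α in (0 : ℝ)..1, hat cQ α * α := by
    refine intervalIntegral.integral_congr fun α hα => ?_
    rw [Set.uIcc_of_le (by norm_num)] at hα
    simp only [abs_of_nonneg hα.1]
  have hneg : ∫ α in (-1 : ℝ)..0, hat cQ α * |α| = ∫ α in (0 : ℝ)..1, hat cQ α * |α| := by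
    have := intervalIntegral.integral_comp_neg (a := 0) (b := 1) fun α : ℝ => hat cQ α * |α|
    simp only [hat_neg, abs_neg, neg_zero] at this
    exact this.symm
  have hsplit := intervalIntegral.integral_add_adjacent_intervals
    (hcabs.intervalIntegrable (μ := volume) (-1) 0) (hcabs.intervalIntegrable (μ := volume) 0 1)
  have hset : {α : ℝ | 1 ≤ |α| ∧ |α| ≤ 2} = Set.Icc (-2) (-1) ∪ Set.Icc 1 2 := by
    ext α
    simp only [Set.mem_ofPred_eq, Set.mem_union, Set.mem_Icc]
    rcases abs_cases α with ⟨h, hh⟩ | ⟨h, hh⟩ <;> rw [h] <;> constructor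
    · rintro ⟨a, b⟩; right; exact ⟨a, b⟩
    · rintro (⟨a, b⟩ | ⟨a, b⟩) <;> constructor <;> linarith
    · rintro ⟨a, b⟩; left; constructor <;> linarith
    · rintro (⟨a, b⟩ | ⟨a, b⟩) <;> constructor <;> linarith
  have hdisj : Disjoint (Set.Icc (-2 : ℝ) (-1)) (Set.Icc 1 2) := by
    rw [Set.disjoint_left]
    intro α h1 h2
    linarith [h1.2, h2.1]
  have hU := setIntegral_union (μ := volume) (f := hat cQ) hdisj measurableSet_Icc
    (continuous_hat cQ).integrableOn_Icc (continuous_hat cQ).integrableOn_Icc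
  rw [integral_Icc_eq_integral_Ioc, integral_Icc_eq_integral_Ioc,
    ← intervalIntegral.integral_of_le (by norm_num), ← intervalIntegral.integral_of_le (by norm_num)]
    at hU
  have hneg2 : ∫ α in (-2 : ℝ)..(-1), hat cQ α = ∫ α in (1 : ℝ)..2, hat cQ α := by
    have := intervalIntegral.integral_comp_neg (a := 1) (b := 2) fun α : ℝ => hat cQ α
    simp only [hat_neg] at this
    exact this.symm
  rw [hset, hU, hneg2, ← hsplit, hneg, hpos]
  ring

lemma gf_zero : gf cP 0 = 10 ^ 50 := by
  norm_num [gf, ev, cP]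

lemma rho2_lt : rho2 (gf cP) / gf cP 0 < 1.0650 := by
  rw [gf_zero, rho2_eq, integral_one, integral_two, div_lt_iff₀ (by positivity)]
  obtain ⟨a1, a2⟩ := exp_two_bounds
  obtain ⟨b1, b2⟩ := exp_eight_bounds
  have hE := gauss_bound
  set E := ∫ α in (1 : ℝ)..2, rexp (-2 * α ^ 2)
  have hG4 : ev cG 4 ≤ -8.428306 * 10 ^ 50 := by norm_num [ev, cG]
  have hG0 : -2.943245 * 10 ^ 50 ≤ ev cG 0 := by norm_num [ev, cG]
  have hH16 : ev cH 16 ≤ 4.635639 * 10 ^ 50 := by norm_num [ev, cH]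
  have hH4 : -0.6304422 * 10 ^ 50 ≤ ev cH 4 := by norm_num [ev, cH]
  have hQ0 : hat cQ 0 ≤ √(2 / π) * (0.6502854 * 10 ^ 50) := by
    have : ev cQ 0 ≤ 0.6502854 * 10 ^ 50 := by norm_num [ev, cQ]
    have e : ev cQ (4 * 0 ^ 2) * rexp (-2 * 0 ^ 2) = ev cQ 0 := by simp
    rw [hat, e]
    exact mul_le_mul_of_nonneg_left this (Real.sqrt_nonneg _)
  have hk : √(2 / π) < 0.7979 := by
    have hpi := Real.pi_gt_d6
    rw [Real.sqrt_lt' (by norm_num), div_lt_iff₀ Real.pi_pos]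
    nlinarith
  have hk0 : 0 ≤ √(2 / π) := Real.sqrt_nonneg _
  have hK : 0.6502854 * 10 ^ 50 + 2 * ((ev cG 4 * rexp (-2) - ev cG 0) / 8) +
      2 * (2 * ev cH 16 * rexp (-8) - ev cH 4 * rexp (-2) + 10 ^ 50 * E) ≤ 1.33475 * 10 ^ 50 := by
    have m1 : ev cG 4 * rexp (-2) ≤ -8.428306 * 10 ^ 50 * rexp (-2) := by gcongr
    have m2 : ev cH 16 * rexp (-8) ≤ 4.635639 * 10 ^ 50 * rexp (-8) := by gcongr
    have m3 : -0.6304422 * 10 ^ 50 * rexp (-2) ≤ ev cH 4 * rexp (-2) := by gcongr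
    have m4 : 10 ^ 50 * E ≤ 10 ^ 50 * (0.21068783 * rexp (-2) - 0.118177025 * rexp (-8)) := by
      gcongr
    linarith
  have hfin := mul_le_mul_of_nonneg_left hK hk0
  have : √(2 / π) * (1.33475 * 10 ^ 50) < 1.0650 * 10 ^ 50 := by linarith
  linarith

end LP2

/-- `C₂ < 1.0650`: there exists a nonzero `g ∈ A₂` with `g(0) > 0` and
`ρ₂(g)/g(0) < 1.0650`. -/
theorem statement18 :
    C2 < 1.0650 ∧
      ∃ g : ℝ → ℝ, memA2 g ∧ g ≠ 0 ∧ 0 < g 0 ∧ rho2 g / g 0 < 1.0650 := by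
  have hg0 : 0 < LP2.gf LP2.cP 0 := by rw [LP2.gf_zero]; positivity
  have hne : LP2.gf LP2.cP ≠ 0 := fun h => by
    rw [h] at hg0
    exact lt_irrefl _ hg0
  refine ⟨?_, LP2.gf LP2.cP, LP2.memA2_gf, hne, hg0, LP2.rho2_lt⟩
  by_cases hb : BddBelow {c : ℝ | ∃ g : ℝ → ℝ, memA2 g ∧ g ≠ 0 ∧ 0 < g 0 ∧ c = rho2 g / g 0}
  · exact lt_of_le_of_lt (csInf_le hb ⟨_, LP2.memA2_gf, hne, hg0, rfl⟩) LP2.rho2_lt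
  · rw [C2, Real.sInf_of_not_bddBelow hb]
    norm_num

end
end
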